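/- For any category C, the rewrite system on words of morphisms is strongly locally confluent: if w → x and w → y with x ≠ y, then there exists a word z with x → z and y → z. In particular the system is locally confluent. -/

import Mathlib

open CategoryTheory

/-- A word of morphisms in a category `C`: a finite list of morphisms, each recorded
with its source and target. -/
abbrev CatWord (C : Type*) [Category C] : Type _ := List (Σ a b : C, a ⟶ b)

/-- The rewrite relation on words of morphisms: delete an identity entry, or replace
two adjacent composable entries `(f, g)` by the single entry `g ∘ f`. -/
inductive RwStep {C : Type*} [Category C] : CatWord C → CatWord C → Prop
  | del (u v : CatWord C) (a : C) :
      RwStep (u ++ ⟨a, a, 𝟙 a⟩ :: v) (u ++ v)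
  | comp (u v : CatWord C) {a b c : C} (f : a ⟶ b) (g : b ⟶ c) :
      RwStep (u ++ ⟨a, b, f⟩ :: ⟨b, c, g⟩ :: v) (u ++ ⟨a, c, f ≫ g⟩ :: v)


inductive RS {C : Type*} [Category C] : CatWord C → CatWord C → Prop
  | del (v : CatWord C) (a : C) : RS (⟨a, a, 𝟙 a⟩ :: v) v
  | comp (v : CatWord C) {a b c : C} (f : a ⟶ b) (g : b ⟶ c) :
      RS (⟨a, b, f⟩ :: ⟨b, c, g⟩ :: v) (⟨a, c, f ≫ g⟩ :: v)
  | cons (p : Σ a b : C, a ⟶ b) {w w' : CatWord C} (h : RS w w') : RS (p :: w) (p :: w')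

theorem RS.append {C : Type*} [Category C] (u : CatWord C) {w w' : CatWord C} (h : RS w w') :
    RS (u ++ w) (u ++ w') := by
  induction u with
  | nil => exact h
  | cons p u ih => exact RS.cons p ih

theorem RwStep.cons' {C : Type*} [Category C] (p : Σ a b : C, a ⟶ b) {w w' : CatWord C}
    (h : RwStep w w') : RwStep (p :: w) (p :: w') := by
  cases h with
  | del u v a => exact RwStep.del (p :: u) v a
  | comp u v f g => exact RwStep.comp (p :: u) v f g

theorem rwStep_iff_rs {C : Type*} [Category C] {w w' : CatWord C} : RwStep w w' ↔ RS w w' := by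
  constructor
  · intro h
    cases h with
    | del u v a => exact (RS.del v a).append u
    | comp u v f g => exact (RS.comp v f g).append u
  · intro h
    induction h with
    | del v a => exact RwStep.del [] v a
    | comp v f g => exact RwStep.comp [] v f g
    | cons p _ ih => exact ih.cons' p

theorem RS.comp_cons {C : Type*} [Category C] {a b c : C} (f : a ⟶ b) (g : b ⟶ c)
    (v w : CatWord C) (h : RS (⟨b, c, g⟩ :: v) w) :
    (⟨a, c, f ≫ g⟩ :: v : CatWord C) = ⟨a, b, f⟩ :: w ∨
      ∃ z, RS (⟨a, c, f ≫ g⟩ :: v) z ∧ RS (⟨a, b, f⟩ :: w) z := by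
  cases h with
  | del => left; simp
  | comp v' _ k =>
    right
    refine ⟨_, RS.comp v' (f ≫ g) k, ?_⟩
    rw [Category.assoc]
    exact RS.comp v' f (g ≫ k)
  | cons _ h => exact Or.inr ⟨_, RS.cons _ h, RS.comp _ f g⟩

theorem RS.confl {C : Type*} [Category C] {w x y : CatWord C} (h : RS w x) (h' : RS w y) :
    x = y ∨ ∃ z, RS x z ∧ RS y z := by
  induction h generalizing y with
  | del v a =>
    cases h' with
    | del => exact Or.inl rfl
    | comp v' _ g => left; simp
    | cons _ h => exact Or.inr ⟨_, h, RS.del _ _⟩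
  | comp v f g =>
    cases h' with
    | del => left; simp
    | comp => exact Or.inl rfl
    | cons _ h => exact RS.comp_cons f g _ _ h
  | cons p h ih =>
    cases h' with
    | del => exact Or.inr ⟨_, RS.del _ _, h⟩
    | comp v f g =>
      rcases RS.comp_cons f g _ _ h with h | ⟨z, h1, h2⟩
      · exact Or.inl h.symm
      · exact Or.inr ⟨z, h2, h1⟩
    | cons _ h' =>
      rcases ih h' with rfl | ⟨z, h1, h2⟩
      · exact Or.inl rfl
      · exact Or.inr ⟨_, h1.cons p, h2.cons p⟩

/-- The rewrite system on words of morphisms is strongly locally confluent: if `w → x`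
and `w → y` with `x ≠ y`, then there is `z` with `x → z` and `y → z`.  In particular it
is locally confluent. -/
theorem rwStep_strongly_locally_confluent (C : Type*) [Category C] :
    (∀ w x y : CatWord C, RwStep w x → RwStep w y → x ≠ y →
      ∃ z : CatWord C, RwStep x z ∧ RwStep y z) ∧
    (∀ w x y : CatWord C, RwStep w x → RwStep w y →
      ∃ z : CatWord C, Relation.ReflTransGen RwStep x z ∧ Relation.ReflTransGen RwStep y z) := by
  have key : ∀ w x y : CatWord C, RwStep w x → RwStep w y →
      x = y ∨ ∃ z : CatWord C, RwStep x z ∧ RwStep y z := by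
    intro w x y h h'
    simp only [rwStep_iff_rs] at *
    exact h.confl h'
  refine ⟨fun w x y h h' hne => (key w x y h h').resolve_left hne, fun w x y h h' => ?_⟩
  rcases key w x y h h' with rfl | ⟨z, h1, h2⟩
  · exact ⟨x, .refl, .refl⟩
  · exact ⟨z, .single h1, .single h2⟩
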